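/- Let d ≥ 2 and let δ : ℤ^d → ℝ be the indicator function of the single point 0 ∈ ℤ^d. Then for every n = (n_1,…,n_d) ∈ ℤ^d, the discrete strong maximal function satisfies M_R δ(n) = ∏_{i=1}^d (|n_i| + 1)^{−1}, while ‖δ‖_{ℓ^1(ℤ^d)} = 1 and Σ_{l=1}^d Σ_{n ∈ ℤ^d} |D_l M_R δ(n)| = +∞. In particular, the map f ↦ ∇M_R f is not bounded from ℓ^1(ℤ^d) to ℓ^1(ℤ^d). -/

import Mathlib

/-!
A rectangle contributes to `M_R δ(n)` only if it contains both `0` and `n`. It then contains the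
whole discrete box `[0 ∧ n, 0 ∨ n]`, which has `∏ (|n i| + 1)` points, so the average of `δ` over
it is at most the inverse of that product; widening the box by one unit on each side gives an
open rectangle with exactly these lattice points, so the bound is attained
(`discStrongMax_delta`).

For the divergence of the gradient it suffices to look at the difference in the direction `e_l`
along a half-axis `{m e_j : m ≥ 0}` with `j ≠ l`: there `M_R δ` drops from `1 / (m + 1)` to
`1 / (2 (m + 1))`, and the harmonic series diverges.
-/


open MeasureTheory ENNReal

/-- The set of lattice points of `ℤ^d` inside the open rectangle `∏ (a i, b i) ⊂ ℝ^d`. -/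
def latticeBox {d : ℕ} (a b : Fin d → ℝ) : Set (Fin d → ℤ) :=
  {k | ∀ i, a i < (k i : ℝ) ∧ (k i : ℝ) < b i}

/-- The discrete multilinear strong maximal function `𝕄_R(f₁,…,f_m)(n)`, with values
in `[0,∞]`; for `m = 1` this is the discrete strong maximal function `M_R f`. -/
noncomputable def discMStrongMax {d m : ℕ} (f : Fin m → (Fin d → ℤ) → ℝ)
    (n : Fin d → ℤ) : ℝ≥0∞ :=
  ⨆ (a : Fin d → ℝ) (b : Fin d → ℝ) (_ : n ∈ latticeBox a b),
    (∏ i : Fin m, ∑' k : Fin d → ℤ,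
        (latticeBox a b).indicator (fun k => ENNReal.ofReal |f i k|) k)
      / ((latticeBox a b).ncard : ℝ≥0∞) ^ m

/-- The discrete strong maximal function of a single function `f : ℤ^d → ℝ`. -/
noncomputable def discStrongMax {d : ℕ} (f : (Fin d → ℤ) → ℝ) (n : Fin d → ℤ) : ℝ≥0∞ :=
  discMStrongMax (fun _ : Fin 1 => f) n

theorem latticeBox_finite {d : ℕ} (a b : Fin d → ℝ) : (latticeBox a b).Finite := by
  refine (Set.finite_Icc (fun i => ⌊a i⌋) (fun i => ⌈b i⌉)).subset fun k hk =>
    ⟨fun i => ?_, fun i => ?_⟩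
  · exact_mod_cast (Int.floor_le (a i)).trans (hk i).1.le
  · exact_mod_cast (hk i).2.le.trans (Int.le_ceil (b i))

theorem card_uIcc_zero {d : ℕ} (n : Fin d → ℤ) :
    ((Finset.uIcc 0 n).card : ℝ≥0∞) = ∏ i, (((n i).natAbs : ℝ≥0∞) + 1) := by
  rw [Pi.card_uIcc]
  simp [Int.card_uIcc]

theorem uIcc_subset_latticeBox {d : ℕ} {a b : Fin d → ℝ} {n : Fin d → ℤ}
    (h0 : 0 ∈ latticeBox a b) (hn : n ∈ latticeBox a b) :
    (↑(Finset.uIcc 0 n) : Set (Fin d → ℤ)) ⊆ latticeBox a b := by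
  intro k hk i
  rw [Finset.coe_uIcc, Set.uIcc, Set.mem_Icc] at hk
  have h1 := h0 i
  have h2 := hn i
  have hl : min 0 (n i) ≤ k i := hk.1 i
  have hr : k i ≤ max 0 (n i) := hk.2 i
  constructor
  · have : ((min 0 (n i) : ℤ) : ℝ) ≤ k i := by exact_mod_cast hl
    refine lt_of_lt_of_le ?_ this
    push_cast
    exact lt_min (by simpa using h1.1) h2.1
  · have : (k i : ℝ) ≤ ((max 0 (n i) : ℤ) : ℝ) := by exact_mod_cast hr
    refine this.trans_lt ?_
    push_cast
    exact max_lt (by simpa using h1.2) h2.2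

/-- The smallest discrete box containing `0` and `n` is cut out by an open rectangle. -/
theorem latticeBox_eq_uIcc {d : ℕ} (n : Fin d → ℤ) :
    latticeBox (fun i => ((min 0 (n i) - 1 : ℤ) : ℝ)) (fun i => ((max 0 (n i) + 1 : ℤ) : ℝ)) =
      ↑(Finset.uIcc 0 n) := by
  ext k
  rw [Finset.coe_uIcc, Set.uIcc, Set.mem_Icc]
  constructor
  · intro h
    refine ⟨fun i => ?_, fun i => ?_⟩
    · have := Int.cast_lt.1 (h i).1
      change min 0 (n i) ≤ k i
      omega
    · have := Int.cast_lt.1 (h i).2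
      change k i ≤ max 0 (n i)
      omega
  · intro h i
    have hl : min 0 (n i) ≤ k i := h.1 i
    have hr : k i ≤ max 0 (n i) := h.2 i
    exact ⟨Int.cast_lt.2 (by omega), Int.cast_lt.2 (by omega)⟩

theorem tsum_indicator_delta {d : ℕ} {δ : (Fin d → ℤ) → ℝ}
    (hδ : ∀ n, δ n = if n = 0 then 1 else 0) (S : Set (Fin d → ℤ)) :
    (∑' k, S.indicator (fun k => ENNReal.ofReal |δ k|) k) = S.indicator 1 0 := by
  rw [tsum_eq_single 0]
  · by_cases h : (0 : Fin d → ℤ) ∈ S <;> simp [h, hδ]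
  · intro k hk
    by_cases h : k ∈ S <;> simp [h, hδ, hk]

theorem discStrongMax_delta {d : ℕ} {δ : (Fin d → ℤ) → ℝ}
    (hδ : ∀ n, δ n = if n = 0 then 1 else 0) (n : Fin d → ℤ) :
    discStrongMax δ n = (∏ i, (((n i).natAbs : ℝ≥0∞) + 1))⁻¹ := by
  rw [← card_uIcc_zero]
  simp only [discStrongMax, discMStrongMax, Finset.univ_unique, Finset.prod_singleton, pow_one,
    tsum_indicator_delta hδ]
  apply le_antisymm
  · refine iSup_le fun a => iSup_le fun b => iSup_le fun hn => ?_
    by_cases h0 : (0 : Fin d → ℤ) ∈ latticeBox a b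
    · rw [Set.indicator_of_mem h0, Pi.one_apply, one_div, ENNReal.inv_le_inv]
      have := Set.ncard_le_ncard (uIcc_subset_latticeBox h0 hn) (latticeBox_finite a b)
      rw [Set.ncard_coe_finset] at this
      exact_mod_cast this
    · simp [h0]
  · refine le_iSup_of_le (fun i => ((min 0 (n i) - 1 : ℤ) : ℝ)) <|
      le_iSup_of_le (fun i => ((max 0 (n i) + 1 : ℤ) : ℝ)) ?_
    rw [latticeBox_eq_uIcc]
    refine le_iSup_of_le (by simp) ?_
    rw [Set.indicator_of_mem (by simp), Set.ncard_coe_finset, Pi.one_apply, one_div]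

/-- The difference of `M_R δ` in the direction `e_l`, at the point `m e_j` with `j ≠ l`. -/
theorem abs_diff_delta {d : ℕ} {δ : (Fin d → ℤ) → ℝ}
    (hδ : ∀ n, δ n = if n = 0 then 1 else 0) {l j : Fin d} (hlj : l ≠ j) (m : ℕ) :
    |(discStrongMax δ ((Pi.single j (m : ℤ) : Fin d → ℤ) + Pi.single l 1)).toReal -
      (discStrongMax δ (Pi.single j (m : ℤ))).toReal| = 1 / 2 * (1 / ((m + 1 : ℕ) : ℝ)) := by
  rw [discStrongMax_delta hδ, discStrongMax_delta hδ,
    Fintype.prod_eq_mul l j hlj (by intro x hx; simp [hx.1, hx.2]),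
    Fintype.prod_eq_mul l j hlj (by intro x hx; simp [hx.2])]
  have e : ((m : ℝ≥0∞) + 1).toReal = m + 1 := by
    rw [ENNReal.toReal_add (by simp) (by simp)]; simp
  have e2 : ((1 : ℝ≥0∞) + 1).toReal = 2 := by norm_num
  simp only [Pi.add_apply, Pi.single_eq_same, Pi.single_eq_of_ne hlj, Pi.single_eq_of_ne hlj.symm,
    zero_add, add_zero, Int.natAbs_one, Int.natAbs_zero, Int.natAbs_natCast, Nat.cast_one,
    Nat.cast_zero, one_mul, ENNReal.toReal_inv, ENNReal.toReal_mul, e, e2]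
  have hm : (0 : ℝ) < m + 1 := by positivity
  have : ((2 : ℝ) * (m + 1))⁻¹ - ((m : ℝ) + 1)⁻¹ = -(1 / 2 * (1 / ((m + 1 : ℕ) : ℝ))) := by
    push_cast
    field_simp
    norm_num
  rw [this, abs_neg, abs_of_nonneg (by positivity)]

theorem tsum_half_harmonic :
    (∑' m : ℕ, ENNReal.ofReal (1 / 2 * (1 / ((m + 1 : ℕ) : ℝ)))) = ∞ := by
  by_contra h
  have hs := ENNReal.summable_toReal h
  simp_rw [ENNReal.toReal_ofReal (show (0 : ℝ) ≤ 1 / 2 * (1 / ((_ + 1 : ℕ) : ℝ)) by positivity)]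
    at hs
  rw [summable_mul_left_iff (by norm_num)] at hs
  exact Real.not_summable_one_div_natCast
    ((summable_nat_add_iff (f := fun m : ℕ => 1 / (m : ℝ)) 1).1 hs)

theorem statement13 (d : ℕ) (hd : 2 ≤ d)
    (δ : (Fin d → ℤ) → ℝ) (hδ : ∀ n, δ n = if n = 0 then 1 else 0) :
    (∀ n : Fin d → ℤ, discStrongMax δ n = (∏ i, (((n i).natAbs : ℝ≥0∞) + 1))⁻¹) ∧
    (∑' n : Fin d → ℤ, |δ n|) = 1 ∧
    (∑ l : Fin d, ∑' n : Fin d → ℤ,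
        ENNReal.ofReal |(discStrongMax δ (n + Pi.single l 1)).toReal -
          (discStrongMax δ n).toReal|) = ∞ := by
  refine ⟨discStrongMax_delta hδ, ?_, ?_⟩
  · rw [tsum_eq_single 0 (by intro k hk; simp [hδ, hk])]
    simp [hδ]
  · let l : Fin d := ⟨0, by omega⟩
    let j : Fin d := ⟨1, by omega⟩
    have hlj : l ≠ j := by simp [l, j]
    refine ENNReal.sum_eq_top.2 ⟨l, Finset.mem_univ l, ?_⟩
    have hinj : Function.Injective (fun m : ℕ => (Pi.single j (m : ℤ) : Fin d → ℤ)) :=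
      (Pi.single_injective j).comp Nat.cast_injective
    refine top_unique (le_trans ?_ (ENNReal.tsum_comp_le_tsum_of_injective hinj _))
    simp only [abs_diff_delta hδ hlj]
    exact tsum_half_harmonic.ge
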